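/- Let (η, α, U, A, φ, σ) be a solution of the Gowdy symmetric IIA system on (T₋,T₊) with 0 < T₋ < t_i < T₊ < ∞, and assume T₊ < ∞. Set γ := η + (1/2)ln α. Then γ is bounded (above and below) on [t_i,T₊) × S¹; consequently α̇/α = ∂ₜ(ln α), ln α, α, η and α̇ are all bounded on [t_i,T₊) × S¹. -/

import Mathlib

/-!
Write `W = α Q² e^{2λφ + 2(η - U)} = Q² e^{2(γ + λφ - U)}`, so that `α̇/α = -tW` and
`γ̇ = t(𝓔 - W/4)`.

The density `α^{-1/2}(𝓔 + W/4)` satisfies the balance law `pt_dens_eq`: its time derivative is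
`∂_θ 𝓕` minus a nonnegative term. Integrating over the circle, the energy `E` is nonincreasing, hence
bounded by its initial value towards the future. Since `α` is nonincreasing in time, it is bounded
above, and `∂ₜ ∫ α^{-1/2} = (t/2) ∫ α^{-1/2} W ≤ 2 t E` bounds `∫ α^{-1/2}` on the finite interval.
Thus `H = 1 + α^{-1/2}(𝓔 + W/4) + α^{-1/2}` has uniformly bounded integral over the circle.

Both first derivatives of each of `γ`, `U` and `φ` are pointwise dominated by a constant times `H`:
for `γ` this is `γ̇ = t(𝓔 - W/4)`, `γ' = t 𝓕 / √α` and `|𝓕| ≤ 𝓔`; for `U` and `φ` it is Young's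
inequality. A function with this property is bounded (`bounded_of_density`), as the time derivative
controls its mean and the angular derivative its oscillation. Hence `W` is bounded, so is
`∂ₜ log α = -tW`, and the remaining bounds follow.
-/

noncomputable section

open Real Set MeasureTheory Filter

/-- Partial derivative in the first (time) variable. -/
def pt (f : ℝ → ℝ → ℝ) : ℝ → ℝ → ℝ := fun t θ => deriv (fun s => f s θ) t

/-- Partial derivative in the second (angle) variable. -/
def pth (f : ℝ → ℝ → ℝ) : ℝ → ℝ → ℝ := fun t θ => deriv (fun x => f t x) θ

/-- The full Gowdy symmetric IIA system (both constraints, the equation for `α`,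
and the four evolution equations) holding at all times in `S` (dot = `pt`,
prime = `pth`). -/
structure IsGowdyIIA (Q lam : ℝ) (S : Set ℝ) (η α U A φ σ : ℝ → ℝ → ℝ) : Prop where
  alpha_pos : ∀ t ∈ S, ∀ θ : ℝ, 0 < α t θ
  constraint_t : ∀ t ∈ S, ∀ θ : ℝ,
    pt η t θ / t =
      (pt U t θ) ^ 2 + α t θ * (pth U t θ) ^ 2
      + exp (4 * U t θ) / (4 * t ^ 2) * ((pt A t θ) ^ 2 + α t θ * (pth A t θ) ^ 2)
      + (1 / 4) * ((pt φ t θ) ^ 2 + α t θ * (pth φ t θ) ^ 2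
          + exp (2 * lam * φ t θ) * ((pt σ t θ) ^ 2 + α t θ * (pth σ t θ) ^ 2)
          + α t θ * Q ^ 2 * exp (2 * lam * φ t θ + 2 * (η t θ - U t θ)))
  constraint_θ : ∀ t ∈ S, ∀ θ : ℝ,
    pth η t θ / t =
      2 * pt U t θ * pth U t θ
      + exp (4 * U t θ) / (2 * t ^ 2) * (pt A t θ * pth A t θ)
      - pth α t θ / (2 * t * α t θ)
      + (1 / 2) * (pt φ t θ * pth φ t θ
          + exp (2 * lam * φ t θ) * (pt σ t θ * pth σ t θ))
  constraint_α : ∀ t ∈ S, ∀ θ : ℝ,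
    pt α t θ = - t * (α t θ) ^ 2 * Q ^ 2 * exp (2 * lam * φ t θ + 2 * (η t θ - U t θ))
  evol_U : ∀ t ∈ S, ∀ θ : ℝ,
    pt (pt U) t θ - α t θ * pth (pth U) t θ =
      - pt U t θ / t + pt α t θ * pt U t θ / (2 * α t θ) + pth α t θ * pth U t θ / 2
      + exp (4 * U t θ) / (2 * t ^ 2) * ((pt A t θ) ^ 2 - α t θ * (pth A t θ) ^ 2)
      + (1 / 4) * α t θ * Q ^ 2 * exp (2 * lam * φ t θ + 2 * (η t θ - U t θ))
  evol_A : ∀ t ∈ S, ∀ θ : ℝ,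
    pt (pt A) t θ - α t θ * pth (pth A) t θ =
      pt A t θ / t + pt α t θ * pt A t θ / (2 * α t θ) + pth α t θ * pth A t θ / 2
      - 4 * (pt A t θ * pt U t θ - α t θ * pth A t θ * pth U t θ)
  evol_φ : ∀ t ∈ S, ∀ θ : ℝ,
    pt (pt φ) t θ - α t θ * pth (pth φ) t θ =
      - pt φ t θ / t + pt α t θ * pt φ t θ / (2 * α t θ) + pth α t θ * pth φ t θ / 2
      + lam * exp (2 * lam * φ t θ) * ((pt σ t θ) ^ 2 - α t θ * (pth σ t θ) ^ 2)
      - lam * α t θ * Q ^ 2 * exp (2 * lam * φ t θ + 2 * (η t θ - U t θ))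
  evol_σ : ∀ t ∈ S, ∀ θ : ℝ,
    pt (pt σ) t θ - α t θ * pth (pth σ) t θ =
      - pt σ t θ / t + pt α t θ * pt σ t θ / (2 * α t θ) + pth α t θ * pth σ t θ / 2
      - 2 * lam * (pt φ t θ * pt σ t θ - α t θ * pth φ t θ * pth σ t θ)

/-- A smooth, spatially `2π`-periodic solution of the Gowdy symmetric IIA system
on the areal time interval `(Tm, Tp)`. -/
structure GowdySolution (Q lam Tm Tp : ℝ) where
  η : ℝ → ℝ → ℝ
  α : ℝ → ℝ → ℝ
  U : ℝ → ℝ → ℝ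
  A : ℝ → ℝ → ℝ
  φ : ℝ → ℝ → ℝ
  σ : ℝ → ℝ → ℝ
  smooth : ∀ f ∈ ([η, α, U, A, φ, σ] : List (ℝ → ℝ → ℝ)),
    ContDiffOn ℝ (⊤ : ℕ∞) (fun p : ℝ × ℝ => f p.1 p.2) (Ioo Tm Tp ×ˢ (univ : Set ℝ))
  periodic : ∀ f ∈ ([η, α, U, A, φ, σ] : List (ℝ → ℝ → ℝ)), ∀ t θ : ℝ,
    f t (θ + 2 * π) = f t θ
  sys : IsGowdyIIA Q lam (Ioo Tm Tp) η α U A φ σ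

/-- The energy density `𝓔`. -/
def calE (lam : ℝ) (α U A φ σ : ℝ → ℝ → ℝ) (t θ : ℝ) : ℝ :=
  (pt U t θ) ^ 2 + α t θ * (pth U t θ) ^ 2
  + exp (4 * U t θ) / (4 * t ^ 2) * ((pt A t θ) ^ 2 + α t θ * (pth A t θ) ^ 2)
  + (1 / 4) * ((pt φ t θ) ^ 2 + α t θ * (pth φ t θ) ^ 2
      + exp (2 * lam * φ t θ) * ((pt σ t θ) ^ 2 + α t θ * (pth σ t θ) ^ 2))

/-- The energy `E(t)` (integral over the circle `S¹ = [0, 2π]`). -/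
def energyE (Q lam : ℝ) (η α U A φ σ : ℝ → ℝ → ℝ) (t : ℝ) : ℝ :=
  ∫ θ in Ioc (0 : ℝ) (2 * π),
    (1 / Real.sqrt (α t θ)) *
      (calE lam α U A φ σ t θ
        + (1 / 4) * α t θ * Q ^ 2 * exp (2 * (η t θ + lam * φ t θ - U t θ)))

/-- The energy `Ẽ(t)`. -/
def energyEt (lam : ℝ) (α U A φ σ : ℝ → ℝ → ℝ) (t : ℝ) : ℝ :=
  ∫ θ in Ioc (0 : ℝ) (2 * π), calE lam α U A φ σ t θ / Real.sqrt (α t θ)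

/-- The timelike convergence condition (TCC) for the Gowdy symmetric IIA system. -/
def TCC (Q lam Tm Tp : ℝ) (η α U φ σ : ℝ → ℝ → ℝ) : Prop :=
  ∀ t ∈ Ioo Tm Tp, ∀ θ : ℝ,
    (pt φ t θ) ^ 2 + exp (2 * lam * φ t θ) * (pt σ t θ) ^ 2
      ≥ (1 / 2) * α t θ * Q ^ 2 * exp (2 * (η t θ + lam * φ t θ - U t θ))

/-! ### Smooth functions on the strip -/

/-- `f` is smooth on the strip `(Tm, Tp) × ℝ`. -/
def Sm (Tm Tp : ℝ) (f : ℝ → ℝ → ℝ) : Prop :=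
  ContDiffOn ℝ (⊤ : ℕ∞) (fun p : ℝ × ℝ => f p.1 p.2) (Ioo Tm Tp ×ˢ (univ : Set ℝ))

section Strip

variable {Tm Tp : ℝ} {f g : ℝ → ℝ → ℝ}

lemma isOpen_strip : IsOpen (Ioo Tm Tp ×ˢ (univ : Set ℝ)) := isOpen_Ioo.prod isOpen_univ

lemma Sm.hasFDerivAt (hf : Sm Tm Tp f) {t : ℝ} (ht : t ∈ Ioo Tm Tp) (θ : ℝ) :
    HasFDerivAt (fun p : ℝ × ℝ => f p.1 p.2)
      (fderiv ℝ (fun p : ℝ × ℝ => f p.1 p.2) (t, θ)) (t, θ) :=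
  ((hf.contDiffAt (isOpen_strip.mem_nhds ⟨ht, mem_univ θ⟩)).differentiableAt
    (by simp)).hasFDerivAt

lemma Sm.hasDerivAt_fst (hf : Sm Tm Tp f) {t : ℝ} (ht : t ∈ Ioo Tm Tp) (θ : ℝ) :
    HasDerivAt (fun s => f s θ) (fderiv ℝ (fun p : ℝ × ℝ => f p.1 p.2) (t, θ) (1, 0)) t :=
  (hf.hasFDerivAt ht θ).comp_hasDerivAt (f := fun s : ℝ => (s, θ)) t
    ((hasDerivAt_id t).prodMk (hasDerivAt_const t θ))

lemma Sm.hasDerivAt_snd (hf : Sm Tm Tp f) {t : ℝ} (ht : t ∈ Ioo Tm Tp) (θ : ℝ) :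
    HasDerivAt (fun x => f t x) (fderiv ℝ (fun p : ℝ × ℝ => f p.1 p.2) (t, θ) (0, 1)) θ :=
  (hf.hasFDerivAt ht θ).comp_hasDerivAt (f := fun x : ℝ => (t, x)) θ
    ((hasDerivAt_const θ t).prodMk (hasDerivAt_id θ))

lemma Sm.pt_eq (hf : Sm Tm Tp f) {t : ℝ} (ht : t ∈ Ioo Tm Tp) (θ : ℝ) :
    pt f t θ = fderiv ℝ (fun p : ℝ × ℝ => f p.1 p.2) (t, θ) (1, 0) :=
  (hf.hasDerivAt_fst ht θ).deriv

lemma Sm.pth_eq (hf : Sm Tm Tp f) {t : ℝ} (ht : t ∈ Ioo Tm Tp) (θ : ℝ) :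
    pth f t θ = fderiv ℝ (fun p : ℝ × ℝ => f p.1 p.2) (t, θ) (0, 1) :=
  (hf.hasDerivAt_snd ht θ).deriv

lemma Sm.hasDerivAt_pt (hf : Sm Tm Tp f) {t : ℝ} (ht : t ∈ Ioo Tm Tp) (θ : ℝ) :
    HasDerivAt (fun s => f s θ) (pt f t θ) t := by
  rw [hf.pt_eq ht]; exact hf.hasDerivAt_fst ht θ

lemma Sm.hasDerivAt_pth (hf : Sm Tm Tp f) {t : ℝ} (ht : t ∈ Ioo Tm Tp) (θ : ℝ) :
    HasDerivAt (fun x => f t x) (pth f t θ) θ := by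
  rw [hf.pth_eq ht]; exact hf.hasDerivAt_snd ht θ

lemma Sm.fderiv (hf : Sm Tm Tp f) :
    ContDiffOn ℝ (⊤ : ℕ∞) (fderiv ℝ (fun p : ℝ × ℝ => f p.1 p.2))
      (Ioo Tm Tp ×ˢ (univ : Set ℝ)) :=
  ContDiffOn.fderiv_of_isOpen hf isOpen_strip (by simp)

lemma Sm.pt (hf : Sm Tm Tp f) : Sm Tm Tp (pt f) :=
  (hf.fderiv.clm_apply contDiffOn_const).congr fun p hp => hf.pt_eq hp.1 p.2

lemma Sm.pth (hf : Sm Tm Tp f) : Sm Tm Tp (pth f) :=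
  (hf.fderiv.clm_apply contDiffOn_const).congr fun p hp => hf.pth_eq hp.1 p.2

lemma Sm.pt_pth_comm (hf : Sm Tm Tp f) {t : ℝ} (ht : t ∈ Ioo Tm Tp) (θ : ℝ) :
    _root_.pt (_root_.pth f) t θ = _root_.pth (_root_.pt f) t θ := by
  have hmem : Ioo Tm Tp ×ˢ (univ : Set ℝ) ∈ nhds (t, θ) :=
    isOpen_strip.mem_nhds ⟨ht, mem_univ θ⟩
  have hsymm : IsSymmSndFDerivAt ℝ (fun p : ℝ × ℝ => f p.1 p.2) (t, θ) :=
    (hf.contDiffAt hmem).isSymmSndFDerivAt (by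
      simp only [minSmoothness_of_isRCLikeNormedField]
      exact WithTop.coe_le_coe.2 (le_top : (2 : ℕ∞) ≤ ⊤))
  have hd : DifferentiableAt ℝ (_root_.fderiv ℝ (fun p : ℝ × ℝ => f p.1 p.2)) (t, θ) :=
    (hf.fderiv.contDiffAt hmem).differentiableAt (by simp)
  have key : ∀ v w : ℝ × ℝ, _root_.fderiv ℝ (fun p : ℝ × ℝ =>
      _root_.fderiv ℝ (fun p : ℝ × ℝ => f p.1 p.2) p v) (t, θ) w
      = _root_.fderiv ℝ (_root_.fderiv ℝ (fun p : ℝ × ℝ => f p.1 p.2)) (t, θ) w v := by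
    intro v w
    rw [fderiv_clm_apply hd (differentiableAt_const v)]
    simp
  rw [hf.pth.pt_eq ht, hf.pt.pth_eq ht]
  have e1 : (fun p : ℝ × ℝ => _root_.pth f p.1 p.2) =ᶠ[nhds (t, θ)] fun p : ℝ × ℝ =>
      _root_.fderiv ℝ (fun p : ℝ × ℝ => f p.1 p.2) p (0, 1) :=
    Filter.mem_of_superset hmem fun p hp => hf.pth_eq hp.1 p.2
  have e2 : (fun p : ℝ × ℝ => _root_.pt f p.1 p.2) =ᶠ[nhds (t, θ)] fun p : ℝ × ℝ =>
      _root_.fderiv ℝ (fun p : ℝ × ℝ => f p.1 p.2) p (1, 0) :=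
    Filter.mem_of_superset hmem fun p hp => hf.pt_eq hp.1 p.2
  rw [e1.fderiv_eq, e2.fderiv_eq, key, key]
  exact hsymm _ _

lemma Sm.continuous_snd (hf : Sm Tm Tp f) {t : ℝ} (ht : t ∈ Ioo Tm Tp) :
    Continuous (fun θ => f t θ) :=
  continuous_iff_continuousAt.2 fun θ => (hf.hasDerivAt_pth ht θ).continuousAt

lemma Sm.intervalIntegrable (hf : Sm Tm Tp f) {t : ℝ} (ht : t ∈ Ioo Tm Tp) (a b : ℝ) :
    IntervalIntegrable (fun θ => f t θ) volume a b :=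
  (hf.continuous_snd ht).intervalIntegrable a b

lemma Sm.add (hf : Sm Tm Tp f) (hg : Sm Tm Tp g) : Sm Tm Tp (fun t θ => f t θ + g t θ) :=
  ContDiffOn.add hf hg

lemma Sm.sub (hf : Sm Tm Tp f) (hg : Sm Tm Tp g) : Sm Tm Tp (fun t θ => f t θ - g t θ) :=
  ContDiffOn.sub hf hg

lemma Sm.mul (hf : Sm Tm Tp f) (hg : Sm Tm Tp g) : Sm Tm Tp (fun t θ => f t θ * g t θ) :=
  ContDiffOn.mul hf hg

lemma Sm.pow (hf : Sm Tm Tp f) (n : ℕ) : Sm Tm Tp (fun t θ => f t θ ^ n) :=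
  ContDiffOn.pow hf n

lemma Sm.exp (hf : Sm Tm Tp f) : Sm Tm Tp (fun t θ => Real.exp (f t θ)) :=
  ContDiffOn.exp hf

lemma Sm.div (hf : Sm Tm Tp f) (hg : Sm Tm Tp g) (h0 : ∀ t ∈ Ioo Tm Tp, ∀ θ, g t θ ≠ 0) :
    Sm Tm Tp (fun t θ => f t θ / g t θ) :=
  ContDiffOn.div hf hg fun p hp => h0 p.1 hp.1 p.2

lemma Sm.sqrt (hf : Sm Tm Tp f) (h0 : ∀ t ∈ Ioo Tm Tp, ∀ θ, f t θ ≠ 0) :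
    Sm Tm Tp (fun t θ => Real.sqrt (f t θ)) :=
  ContDiffOn.sqrt hf fun p hp => h0 p.1 hp.1 p.2

lemma Sm.log (hf : Sm Tm Tp f) (h0 : ∀ t ∈ Ioo Tm Tp, ∀ θ, f t θ ≠ 0) :
    Sm Tm Tp (fun t θ => Real.log (f t θ)) :=
  ContDiffOn.log hf fun p hp => h0 p.1 hp.1 p.2

lemma Sm.const (c : ℝ) : Sm Tm Tp (fun _ _ => c) := contDiffOn_const

lemma Sm.time : Sm Tm Tp (fun t _ => t) := contDiffOn_fst

/-- Differentiation under the integral sign over one period. -/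
lemma Sm.hasDerivAt_integral (hf : Sm Tm Tp f) {t : ℝ} (ht : t ∈ Ioo Tm Tp) :
    HasDerivAt (fun s => ∫ θ in (0 : ℝ)..(2 * π), f s θ)
      (∫ θ in (0 : ℝ)..(2 * π), _root_.pt f t θ) t := by
  obtain ⟨a, ha1, ha2⟩ := exists_between ht.1
  obtain ⟨b, hb1, hb2⟩ := exists_between ht.2
  have hsub : Icc a b ⊆ Ioo Tm Tp := fun x hx => ⟨ha1.trans_le hx.1, hx.2.trans_lt hb2⟩
  have hcomp : IsCompact (Icc a b ×ˢ Icc (0 : ℝ) (2 * π)) := isCompact_Icc.prod isCompact_Icc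
  obtain ⟨C, hC⟩ := hcomp.exists_bound_of_continuousOn
    (f := fun p : ℝ × ℝ => _root_.pt f p.1 p.2)
    (ContDiffOn.continuousOn hf.pt |>.mono (prod_mono hsub (subset_univ _)))
  have hIoc : uIoc (0 : ℝ) (2 * π) ⊆ Icc 0 (2 * π) := by
    rw [uIoc_of_le (by positivity)]; exact Ioc_subset_Icc_self
  refine (intervalIntegral.hasDerivAt_integral_of_dominated_loc_of_deriv_le
    (bound := fun _ => C) (F' := _root_.pt f) (Icc_mem_nhds ha2 hb1) ?_
    (hf.intervalIntegrable ht _ _) (hf.pt.continuous_snd ht).aestronglyMeasurable ?_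
    intervalIntegrable_const ?_).2
  · filter_upwards [Icc_mem_nhds ha2 hb1] with x hx
    exact (hf.continuous_snd (hsub hx)).aestronglyMeasurable
  · exact Filter.Eventually.of_forall fun θ hθ x hx => hC (x, θ) ⟨hx, hIoc hθ⟩
  · exact Filter.Eventually.of_forall fun θ hθ x hx => hf.hasDerivAt_pt (hsub hx) θ

end Strip

/-! ### Boundedness from integral bounds -/

lemma exists_mem_period (θ : ℝ) (f : ℝ → ℝ) (hp : ∀ θ, f (θ + 2 * π) = f θ) :
    ∃ x ∈ Icc (0 : ℝ) (2 * π), f θ = f x := by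
  obtain ⟨x, hx, h⟩ := (show Function.Periodic f (2 * π) from hp).exists_mem_Ico₀
    (by positivity) θ
  exact ⟨x, ⟨hx.1, hx.2.le⟩, h⟩

lemma bounded_of_continuous_periodic (f : ℝ → ℝ) (hf : Continuous f)
    (hp : ∀ θ, f (θ + 2 * π) = f θ) : ∃ C, ∀ θ, |f θ| ≤ C := by
  obtain ⟨C, hC⟩ := (isCompact_Icc (a := (0 : ℝ)) (b := 2 * π)).exists_bound_of_continuousOn
    hf.continuousOn
  refine ⟨C, fun θ => ?_⟩
  obtain ⟨x, hx, h⟩ := exists_mem_period θ f hp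
  rw [h]; exact hC x hx

/-- A linear-growth bound on `[t_i, Tp)` from an upper bound on the derivative. -/
lemma le_add_of_deriv_le {Tp t_i K : ℝ} {F F' : ℝ → ℝ}
    (hF : ∀ t ∈ Ico t_i Tp, HasDerivAt F (F' t) t) (hK : ∀ t ∈ Ico t_i Tp, F' t ≤ K) :
    ∀ t ∈ Ico t_i Tp, F t - F t_i ≤ K * (t - t_i) := by
  intro t ht
  refine (convex_Ico t_i Tp).image_sub_le_mul_sub_of_deriv_le
    (fun x hx => (hF x hx).continuousAt.continuousWithinAt)
    (fun x hx => (hF x (interior_subset hx)).differentiableAt.differentiableWithinAt)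
    (fun x hx => ?_) t_i ⟨le_rfl, ht.1.trans_lt ht.2⟩ t ht ht.1
  rw [(hF x (interior_subset hx)).deriv]
  exact hK x (interior_subset hx)

lemma abs_sub_le_of_abs_deriv_le {Tp t_i K : ℝ} {F F' : ℝ → ℝ}
    (hF : ∀ t ∈ Ico t_i Tp, HasDerivAt F (F' t) t) (hK : ∀ t ∈ Ico t_i Tp, |F' t| ≤ K) :
    ∀ t ∈ Ico t_i Tp, |F t - F t_i| ≤ K * (Tp - t_i) := by
  intro t ht
  have h1 := le_add_of_deriv_le hF (fun t ht => (abs_le.1 (hK t ht)).2) t ht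
  have h2 := le_add_of_deriv_le (K := K) (fun t ht => (hF t ht).neg)
    (fun t ht => by linarith [(abs_le.1 (hK t ht)).1]) t ht
  have hK0 : 0 ≤ K := (abs_nonneg _).trans (hK t ht)
  have h3 : K * (t - t_i) ≤ K * (Tp - t_i) :=
    mul_le_mul_of_nonneg_left (by linarith [ht.2]) hK0
  simp only [Pi.neg_apply] at h2
  exact abs_le.2 ⟨by linarith, by linarith⟩

/-- A periodic function on the strip whose two first derivatives are dominated by a density with
uniformly bounded circle integral is bounded: the time derivative controls its mean, the angular
derivative its oscillation. -/
lemma bounded_of_density {Tm Tp t_i M K : ℝ} (hti : Tm < t_i)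
    {f H : ℝ → ℝ → ℝ} (hf : Sm Tm Tp f) (hH : Sm Tm Tp H)
    (hper : ∀ t θ, f t (θ + 2 * π) = f t θ)
    (hM : 0 ≤ M)
    (hHK : ∀ t ∈ Ico t_i Tp, ∫ θ in (0 : ℝ)..(2 * π), H t θ ≤ K)
    (ht_le : ∀ t ∈ Ico t_i Tp, ∀ θ, |pt f t θ| ≤ M * H t θ)
    (hθ_le : ∀ t ∈ Ico t_i Tp, ∀ θ, |pth f t θ| ≤ M * H t θ) :
    ∃ C, ∀ t ∈ Ico t_i Tp, ∀ θ, |f t θ| ≤ C := by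
  have hI : ∀ t ∈ Ico t_i Tp, t ∈ Ioo Tm Tp := fun t ht => ⟨hti.trans_le ht.1, ht.2⟩
  have h2pi : (0 : ℝ) ≤ 2 * π := by positivity
  have hMH : ∀ t ∈ Ico t_i Tp, ∫ θ in (0 : ℝ)..(2 * π), M * H t θ ≤ M * K := fun t ht => by
    rw [intervalIntegral.integral_const_mul]
    exact mul_le_mul_of_nonneg_left (hHK t ht) hM
  have hMHi : ∀ t ∈ Ico t_i Tp, ∀ a b : ℝ,
      IntervalIntegrable (fun θ => M * H t θ) volume a b := fun t ht a b =>
    (hH.intervalIntegrable (hI t ht) a b).const_mul M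
  have hmean := abs_sub_le_of_abs_deriv_le (K := M * K)
    (fun t ht => hf.hasDerivAt_integral (hI t ht)) (fun t ht => by
      refine le_trans ?_ (hMH t ht)
      rw [← Real.norm_eq_abs]
      exact intervalIntegral.norm_integral_le_of_norm_le h2pi
        (Filter.Eventually.of_forall fun θ _ => ht_le t ht θ) (hMHi t ht _ _))
  -- on one period, any two values differ by at most the integral of the dominating density
  have hosc : ∀ t ∈ Ico t_i Tp, ∀ x ∈ Icc (0 : ℝ) (2 * π), ∀ y ∈ Icc (0 : ℝ) (2 * π),
      x ≤ y → |f t y - f t x| ≤ M * K := by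
    intro t ht x hx y hy hxy
    rw [← Real.norm_eq_abs, ← intervalIntegral.integral_eq_sub_of_hasDerivAt
      (fun θ _ => hf.hasDerivAt_pth (hI t ht) θ) (hf.pth.intervalIntegrable (hI t ht) _ _)]
    refine le_trans (intervalIntegral.norm_integral_le_of_norm_le hxy
        (Filter.Eventually.of_forall fun θ _ => hθ_le t ht θ) (hMHi t ht _ _)) ?_
    refine le_trans ?_ (hMH t ht)
    exact intervalIntegral.integral_mono_interval hx.1 hxy hy.2
      (Filter.Eventually.of_forall fun θ => (abs_nonneg _).trans (ht_le t ht θ)) (hMHi t ht _ _)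
  have hosc' : ∀ t ∈ Ico t_i Tp, ∀ x ∈ Icc (0 : ℝ) (2 * π), ∀ y ∈ Icc (0 : ℝ) (2 * π),
      |f t x - f t y| ≤ M * K := by
    intro t ht x hx y hy
    rcases le_total x y with h | h
    · rw [abs_sub_comm]; exact hosc t ht x hx y hy h
    · exact hosc t ht y hy x hx h
  set m : ℝ := |∫ θ in (0 : ℝ)..(2 * π), f t_i θ| + M * K * (Tp - t_i) with hm
  refine ⟨(2 * π * (M * K) + m) / (2 * π), fun t ht θ => ?_⟩
  obtain ⟨x, hx, hfx⟩ := exists_mem_period θ (f t) (hper t)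
  rw [hfx, le_div_iff₀ (by positivity)]
  have h1 : |∫ y in (0 : ℝ)..(2 * π), (f t x - f t y)| ≤ M * K * |2 * π - 0| := by
    rw [← Real.norm_eq_abs]
    refine intervalIntegral.norm_integral_le_of_norm_le_const fun y hy => ?_
    rw [uIoc_of_le h2pi] at hy
    exact hosc' t ht x hx y ⟨hy.1.le, hy.2⟩
  rw [intervalIntegral.integral_sub intervalIntegrable_const
    (hf.intervalIntegrable (hI t ht) _ _), intervalIntegral.integral_const, sub_zero,
    abs_of_nonneg h2pi, smul_eq_mul] at h1
  have h2 := hmean t ht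
  have h3 : |f t x| * (2 * π) = |2 * π * f t x| := by
    rw [abs_mul, abs_of_nonneg h2pi]; ring
  rw [h3]
  have h4 := abs_le.1 h1
  have h5 := abs_le.1 h2
  have h6 := neg_abs_le (∫ θ in (0 : ℝ)..(2 * π), f t_i θ)
  have h7 := le_abs_self (∫ θ in (0 : ℝ)..(2 * π), f t_i θ)
  exact abs_le.2 ⟨by linarith [h4.1], by linarith [h4.2]⟩

/-! ### The energy density and its flux -/

section Energy

variable {Q lam Tm Tp : ℝ}

/-- The potential term `W = α Q² e^{2λφ + 2(η - U)} = Q² e^{2(γ + λφ - U)}`. -/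
def potW (G : GowdySolution Q lam Tm Tp) (t θ : ℝ) : ℝ :=
  G.α t θ * Q ^ 2 * exp (2 * lam * G.φ t θ + 2 * (G.η t θ - G.U t θ))

/-- The integrand `α^{-1/2} (𝓔 + W / 4)` of the energy `E`. -/
def dens (G : GowdySolution Q lam Tm Tp) (t θ : ℝ) : ℝ :=
  ((pt G.U t θ) ^ 2 + G.α t θ * (pth G.U t θ) ^ 2
    + exp (4 * G.U t θ) / (4 * t ^ 2) * ((pt G.A t θ) ^ 2 + G.α t θ * (pth G.A t θ) ^ 2)
    + (1 / 4) * ((pt G.φ t θ) ^ 2 + G.α t θ * (pth G.φ t θ) ^ 2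
      + exp (2 * lam * G.φ t θ) * ((pt G.σ t θ) ^ 2 + G.α t θ * (pth G.σ t θ) ^ 2)
      + G.α t θ * Q ^ 2 * exp (2 * lam * G.φ t θ + 2 * (G.η t θ - G.U t θ))))
  / Real.sqrt (G.α t θ)

/-- The energy flux `𝓕`. -/
def flux (G : GowdySolution Q lam Tm Tp) (t θ : ℝ) : ℝ :=
  Real.sqrt (G.α t θ) * (2 * (pt G.U t θ * pth G.U t θ)
    + exp (4 * G.U t θ) / (2 * t ^ 2) * (pt G.A t θ * pth G.A t θ)
    + (1 / 2) * (pt G.φ t θ * pth G.φ t θ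
      + exp (2 * lam * G.φ t θ) * (pt G.σ t θ * pth G.σ t θ)))

/-- The inverse square root `α^{-1/2}`. -/
def invSqrt (G : GowdySolution Q lam Tm Tp) (t θ : ℝ) : ℝ := 1 / Real.sqrt (G.α t θ)

variable (G : GowdySolution Q lam Tm Tp)

lemma smη : Sm Tm Tp G.η := G.smooth _ (by simp)
lemma smα : Sm Tm Tp G.α := G.smooth _ (by simp)
lemma smU : Sm Tm Tp G.U := G.smooth _ (by simp)
lemma smA : Sm Tm Tp G.A := G.smooth _ (by simp)
lemma smφ : Sm Tm Tp G.φ := G.smooth _ (by simp)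
lemma smσ : Sm Tm Tp G.σ := G.smooth _ (by simp)

lemma smSqrt : Sm Tm Tp (fun t θ => Real.sqrt (G.α t θ)) :=
  (smα G).sqrt fun t ht θ => (G.sys.alpha_pos t ht θ).ne'

lemma sqrt_ne {t : ℝ} (ht : t ∈ Ioo Tm Tp) (θ : ℝ) : Real.sqrt (G.α t θ) ≠ 0 :=
  (Real.sqrt_pos.2 (G.sys.alpha_pos t ht θ)).ne'

lemma smInvSqrt : Sm Tm Tp (invSqrt G) :=
  (Sm.const 1).div (smSqrt G) fun _ ht θ => sqrt_ne G ht θ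

lemma smDens (hTm : 0 < Tm) : Sm Tm Tp (dens G) := by
  have hη := smη G
  have hα := smα G
  have hU := smU G
  have hφ := smφ G
  have hX : Sm Tm Tp (fun t θ => exp (4 * G.U t θ) / (4 * t ^ 2)) :=
    ((Sm.const 4).mul hU).exp.div ((Sm.const 4).mul (Sm.time.pow 2))
      fun t ht θ => by have := hTm.trans ht.1; positivity
  have hY : Sm Tm Tp (fun t θ => exp (2 * lam * G.φ t θ)) := ((Sm.const (2 * lam)).mul hφ).exp
  have hW : Sm Tm Tp (fun t θ => G.α t θ * Q ^ 2
      * exp (2 * lam * G.φ t θ + 2 * (G.η t θ - G.U t θ))) :=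
    (hα.mul (Sm.const (Q ^ 2))).mul
      (((Sm.const (2 * lam)).mul hφ).add ((Sm.const 2).mul (hη.sub hU))).exp
  have quad : ∀ f, Sm Tm Tp f → Sm Tm Tp (fun t θ => (pt f t θ) ^ 2 + G.α t θ * (pth f t θ) ^ 2) :=
    fun f hf => (hf.pt.pow 2).add (hα.mul (hf.pth.pow 2))
  exact ((((quad _ hU).add (hX.mul (quad _ (smA G)))).add ((Sm.const (1 / 4)).mul
    (((quad _ hφ).add (hY.mul (quad _ (smσ G)))).add hW)))).div (smSqrt G)
      fun _ ht θ => sqrt_ne G ht θ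

lemma smFlux (hTm : 0 < Tm) : Sm Tm Tp (flux G) := by
  have hU := smU G
  have hφ := smφ G
  have hX : Sm Tm Tp (fun t θ => exp (4 * G.U t θ) / (2 * t ^ 2)) :=
    ((Sm.const 4).mul hU).exp.div ((Sm.const 2).mul (Sm.time.pow 2))
      fun t ht θ => by have := hTm.trans ht.1; positivity
  have hY : Sm Tm Tp (fun t θ => exp (2 * lam * G.φ t θ)) := ((Sm.const (2 * lam)).mul hφ).exp
  have bil : ∀ f, Sm Tm Tp f → Sm Tm Tp (fun t θ => pt f t θ * pth f t θ) :=
    fun f hf => hf.pt.mul hf.pth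
  exact (smSqrt G).mul ((((Sm.const 2).mul (bil _ hU)).add (hX.mul (bil _ (smA G)))).add
    ((Sm.const (1 / 2)).mul ((bil _ hφ).add (hY.mul (bil _ (smσ G))))))

lemma pt_periodic {f : ℝ → ℝ → ℝ} (hf : ∀ t θ, f t (θ + 2 * π) = f t θ) (t θ : ℝ) :
    pt f t (θ + 2 * π) = pt f t θ := by
  simp only [pt, hf]

lemma pth_periodic {f : ℝ → ℝ → ℝ} (hf : ∀ t θ, f t (θ + 2 * π) = f t θ) (t θ : ℝ) :
    pth f t (θ + 2 * π) = pth f t θ := by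
  simp only [pth]
  rw [← deriv_comp_add_const]
  simp only [hf]

lemma flux_periodic (t θ : ℝ) : flux G t (θ + 2 * π) = flux G t θ := by
  have hα := G.periodic G.α (by simp)
  have hU := G.periodic G.U (by simp)
  have hA := G.periodic G.A (by simp)
  have hφ := G.periodic G.φ (by simp)
  have hσ := G.periodic G.σ (by simp)
  simp only [flux, hα, hU, hφ, pt_periodic hU, pt_periodic hA, pt_periodic hφ, pt_periodic hσ,
    pth_periodic hU, pth_periodic hA, pth_periodic hφ, pth_periodic hσ]

set_option maxHeartbeats 1000000 in
/-- Local energy balance: `∂ₜ(α^{-1/2}(𝓔 + W/4)) - ∂_θ 𝓕` equals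
`-(2/t) α^{-1/2} (U̇² + e^{4U} α A'²/(4t²) + (φ̇² + e^{2λφ} σ̇²)/4)`. The contributions of `W` cancel
because `α̇/α = -tW` and `γ̇ = t(𝓔 - W/4)`. -/
lemma pt_dens_eq (hTm : 0 < Tm) {t : ℝ} (ht : t ∈ Ioo Tm Tp) (θ : ℝ) :
    pt (dens G) t θ = pth (flux G) t θ
      - 2 / (t * Real.sqrt (G.α t θ)) * ((pt G.U t θ) ^ 2
        + exp (4 * G.U t θ) / (4 * t ^ 2) * (G.α t θ * (pth G.A t θ) ^ 2)
        + (1 / 4) * ((pt G.φ t θ) ^ 2 + exp (2 * lam * G.φ t θ) * (pt G.σ t θ) ^ 2)) := by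
  have t0 : 0 < t := hTm.trans ht.1
  have hα0 := G.sys.alpha_pos t ht θ
  have hs0 := sqrt_ne G ht θ
  have hX2 : (2 * t ^ 2) ≠ 0 := by positivity
  have hX4 : (4 * t ^ 2) ≠ 0 := by positivity
  have tη := (smη G).hasDerivAt_pt ht θ
  have tα := (smα G).hasDerivAt_pt ht θ
  have tU := (smU G).hasDerivAt_pt ht θ
  have tφ := (smφ G).hasDerivAt_pt ht θ
  have quad : ∀ f, Sm Tm Tp f → HasDerivAt (fun s => (pt f s θ) ^ 2 + G.α s θ * (pth f s θ) ^ 2)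
      (2 * pt f t θ * pt (pt f) t θ + (pt G.α t θ * (pth f t θ) ^ 2
        + G.α t θ * (2 * pth f t θ * pth (pt f) t θ))) t := fun f hf => by
    have h1 := hf.pth.hasDerivAt_pt ht θ
    rw [hf.pt_pth_comm ht θ] at h1
    exact (((hf.pt.hasDerivAt_pt ht θ).fun_pow 2).fun_add (tα.fun_mul (h1.fun_pow 2))).congr_deriv
      (by ring)
  have hd := ((((quad _ (smU G)).fun_add
      (((tU.const_mul 4).exp.fun_div (((hasDerivAt_id' t).fun_pow 2).const_mul 4) hX4).fun_mul
        (quad _ (smA G)))).fun_add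
      ((((quad _ (smφ G)).fun_add ((tφ.const_mul (2 * lam)).exp.fun_mul (quad _ (smσ G)))).fun_add
        ((tα.mul_const (Q ^ 2)).fun_mul ((tφ.const_mul (2 * lam)).fun_add
          ((tη.fun_sub tU).const_mul 2)).exp)).const_mul (1 / 4)))).fun_div
      (tα.sqrt hα0.ne') hs0
  have xα := (smα G).hasDerivAt_pth ht θ
  have xU := (smU G).hasDerivAt_pth ht θ
  have xφ := (smφ G).hasDerivAt_pth ht θ
  have bil : ∀ f, Sm Tm Tp f → HasDerivAt (fun x => pt f t x * pth f t x)
      (pth (pt f) t θ * pth f t θ + pt f t θ * pth (pth f) t θ) θ := fun f hf =>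
    (hf.pt.hasDerivAt_pth ht θ).fun_mul (hf.pth.hasDerivAt_pth ht θ)
  have hf := (xα.sqrt hα0.ne').fun_mul ((((bil _ (smU G)).const_mul 2).fun_add
    (((xU.const_mul 4).exp.div_const (2 * t ^ 2)).fun_mul (bil _ (smA G)))).fun_add
    (((bil _ (smφ G)).fun_add ((xφ.const_mul (2 * lam)).exp.fun_mul
      (bil _ (smσ G)))).const_mul (1 / 2)))
  have e1 : pt (dens G) t θ = _ := hd.deriv
  have e2 : pth (flux G) t θ = _ := hf.deriv
  rw [e1, e2]
  have c1 := G.sys.constraint_t t ht θ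
  have c2 := G.sys.constraint_α t ht θ
  have c3 := G.sys.evol_U t ht θ
  have c4 := G.sys.evol_A t ht θ
  have c5 := G.sys.evol_φ t ht θ
  have c6 := G.sys.evol_σ t ht θ
  clear hd hf e1 e2 bil quad tη tα tU tφ xα xU xφ
  have hsq : G.α t θ = Real.sqrt (G.α t θ) ^ 2 := (Real.sq_sqrt hα0.le).symm
  clear hα0
  rw [div_eq_iff t0.ne'] at c1
  rw [sub_eq_iff_eq_add] at c3 c4 c5 c6
  generalize Real.sqrt (G.α t θ) = s at *
  generalize G.α t θ = a at *
  subst hsq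
  rw [c3, c4, c5, c6, c1, c2]
  generalize exp (2 * lam * G.φ t θ + 2 * (G.η t θ - G.U t θ)) = Z
  generalize exp (4 * G.U t θ) = X
  generalize exp (2 * lam * G.φ t θ) = Y
  field_simp
  ring

/-- The energy `∫ α^{-1/2}(𝓔 + W/4)` is nonincreasing towards the future. -/
lemma integral_pt_dens_nonpos (hTm : 0 < Tm) {t : ℝ} (ht : t ∈ Ioo Tm Tp) :
    ∫ θ in (0 : ℝ)..(2 * π), pt (dens G) t θ ≤ 0 := by
  have t0 : 0 < t := hTm.trans ht.1
  have h0 : ∫ θ in (0 : ℝ)..(2 * π), pth (flux G) t θ = 0 := by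
    rw [intervalIntegral.integral_eq_sub_of_hasDerivAt
      (fun θ _ => (smFlux G hTm).hasDerivAt_pth ht θ)
      ((smFlux G hTm).pth.intervalIntegrable ht _ _)]
    have := flux_periodic G t 0
    rw [zero_add] at this
    rw [this, sub_self]
  refine le_of_le_of_eq ?_ h0
  refine intervalIntegral.integral_mono_on (by positivity)
    ((smDens G hTm).pt.intervalIntegrable ht _ _)
    ((smFlux G hTm).pth.intervalIntegrable ht _ _) fun θ _ => ?_
  rw [pt_dens_eq G hTm ht θ]
  have hα0 := G.sys.alpha_pos t ht θ
  have : 0 ≤ 2 / (t * Real.sqrt (G.α t θ)) * ((pt G.U t θ) ^ 2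
        + exp (4 * G.U t θ) / (4 * t ^ 2) * (G.α t θ * (pth G.A t θ) ^ 2)
        + (1 / 4) * ((pt G.φ t θ) ^ 2 + exp (2 * lam * G.φ t θ) * (pt G.σ t θ) ^ 2)) := by
    positivity
  linarith

/-- The elementary inequality behind `|𝓕| ≤ 𝓔`. -/
lemma abs_two_mul_le (s a b : ℝ) : |2 * (s * (a * b))| ≤ a ^ 2 + s ^ 2 * b ^ 2 :=
  abs_le.2 ⟨by nlinarith [sq_nonneg (a + s * b)], by nlinarith [sq_nonneg (a - s * b)]⟩

lemma dens_mul_sqrt {t : ℝ} (ht : t ∈ Ioo Tm Tp) (θ : ℝ) :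
    dens G t θ * Real.sqrt (G.α t θ) = calE lam G.α G.U G.A G.φ G.σ t θ + potW G t θ / 4 := by
  rw [dens, div_mul_cancel₀ _ (sqrt_ne G ht θ), calE, potW]
  ring

lemma potW_nonneg {t : ℝ} (ht : t ∈ Ioo Tm Tp) (θ : ℝ) : 0 ≤ potW G t θ := by
  have hα0 := G.sys.alpha_pos t ht θ
  unfold potW
  positivity

lemma calE_ge_U {t : ℝ} (ht : t ∈ Ioo Tm Tp) (θ : ℝ) :
    (pt G.U t θ) ^ 2 + G.α t θ * (pth G.U t θ) ^ 2 ≤ calE lam G.α G.U G.A G.φ G.σ t θ := by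
  have hα0 := G.sys.alpha_pos t ht θ
  have : 0 ≤ exp (4 * G.U t θ) / (4 * t ^ 2) * ((pt G.A t θ) ^ 2 + G.α t θ * (pth G.A t θ) ^ 2)
    + (1 / 4) * ((pt G.φ t θ) ^ 2 + G.α t θ * (pth G.φ t θ) ^ 2
      + exp (2 * lam * G.φ t θ) * ((pt G.σ t θ) ^ 2 + G.α t θ * (pth G.σ t θ) ^ 2)) := by
    positivity
  unfold calE
  linarith

lemma calE_ge_φ {t : ℝ} (ht : t ∈ Ioo Tm Tp) (θ : ℝ) :
    (1 / 4) * ((pt G.φ t θ) ^ 2 + G.α t θ * (pth G.φ t θ) ^ 2)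
      ≤ calE lam G.α G.U G.A G.φ G.σ t θ := by
  have hα0 := G.sys.alpha_pos t ht θ
  have : 0 ≤ (pt G.U t θ) ^ 2 + G.α t θ * (pth G.U t θ) ^ 2
    + exp (4 * G.U t θ) / (4 * t ^ 2) * ((pt G.A t θ) ^ 2 + G.α t θ * (pth G.A t θ) ^ 2)
    + (1 / 4) * (exp (2 * lam * G.φ t θ)
      * ((pt G.σ t θ) ^ 2 + G.α t θ * (pth G.σ t θ) ^ 2)) := by
    positivity
  unfold calE
  linarith

/-- `|𝓕| ≤ 𝓔`, pointwise. -/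
lemma abs_flux_le {t : ℝ} (ht : t ∈ Ioo Tm Tp) (θ : ℝ) :
    |flux G t θ| ≤ calE lam G.α G.U G.A G.φ G.σ t θ := by
  have hα0 := G.sys.alpha_pos t ht θ
  have hsq : Real.sqrt (G.α t θ) ^ 2 = G.α t θ := Real.sq_sqrt hα0.le
  have q : ∀ f : ℝ → ℝ → ℝ, |2 * (Real.sqrt (G.α t θ) * (pt f t θ * pth f t θ))|
      ≤ (pt f t θ) ^ 2 + G.α t θ * (pth f t θ) ^ 2 := fun f => by
    have := abs_two_mul_le (Real.sqrt (G.α t θ)) (pt f t θ) (pth f t θ)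
    rwa [hsq] at this
  have hX : 0 ≤ exp (4 * G.U t θ) / (4 * t ^ 2) := by positivity
  have hY : 0 ≤ exp (2 * lam * G.φ t θ) := by positivity
  have hA := abs_le.1 (q G.A)
  have hU := abs_le.1 (q G.U)
  have hφ := abs_le.1 (q G.φ)
  have hσ := abs_le.1 (q G.σ)
  have e : flux G t θ = 2 * (Real.sqrt (G.α t θ) * (pt G.U t θ * pth G.U t θ))
      + exp (4 * G.U t θ) / (4 * t ^ 2) * (2 * (Real.sqrt (G.α t θ) * (pt G.A t θ * pth G.A t θ)))
      + (1 / 4) * (2 * (Real.sqrt (G.α t θ) * (pt G.φ t θ * pth G.φ t θ))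
        + exp (2 * lam * G.φ t θ)
          * (2 * (Real.sqrt (G.α t θ) * (pt G.σ t θ * pth G.σ t θ)))) := by
    unfold flux; ring
  have a1 := mul_le_mul_of_nonneg_left hA.1 hX
  have a2 := mul_le_mul_of_nonneg_left hA.2 hX
  have b1 := mul_le_mul_of_nonneg_left hσ.1 hY
  have b2 := mul_le_mul_of_nonneg_left hσ.2 hY
  rw [e, calE]
  exact abs_le.2 ⟨by linarith [hU.1, hφ.1], by linarith [hU.2, hφ.2]⟩

lemma pt_alpha_eq {t : ℝ} (ht : t ∈ Ioo Tm Tp) (θ : ℝ) :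
    pt G.α t θ = -t * potW G t θ * G.α t θ := by
  rw [G.sys.constraint_α t ht θ, potW]; ring

lemma pt_log_alpha {t : ℝ} (ht : t ∈ Ioo Tm Tp) (θ : ℝ) :
    HasDerivAt (fun s => Real.log (G.α s θ)) (-t * potW G t θ) t := by
  have hα0 := G.sys.alpha_pos t ht θ
  refine (((smα G).hasDerivAt_pt ht θ).log hα0.ne').congr_deriv ?_
  rw [pt_alpha_eq G ht θ]
  field_simp

lemma pt_invSqrt {t : ℝ} (ht : t ∈ Ioo Tm Tp) (θ : ℝ) :
    pt (invSqrt G) t θ = t * (potW G t θ / Real.sqrt (G.α t θ)) / 2 := by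
  have hα0 := G.sys.alpha_pos t ht θ
  have hs0 := sqrt_ne G ht θ
  have h := (hasDerivAt_const t (1 : ℝ)).fun_div
    (((smα G).hasDerivAt_pt ht θ).sqrt hα0.ne') hs0
  have e : pt (invSqrt G) t θ = _ := h.deriv
  rw [e, pt_alpha_eq G ht θ]
  have hsq : G.α t θ = Real.sqrt (G.α t θ) ^ 2 := (Real.sq_sqrt hα0.le).symm
  clear h e hα0
  generalize potW G t θ = W
  generalize Real.sqrt (G.α t θ) = s at *
  rw [hsq]
  field_simp
  ring

/-- The function `γ = η + (1/2) log α`. -/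
def gam (t θ : ℝ) : ℝ := G.η t θ + 1 / 2 * Real.log (G.α t θ)

lemma smGam : Sm Tm Tp (gam G) :=
  (smη G).add ((Sm.const (1 / 2)).mul
    ((smα G).log fun t ht θ => (G.sys.alpha_pos t ht θ).ne'))

lemma pt_gam (hTm : 0 < Tm) {t : ℝ} (ht : t ∈ Ioo Tm Tp) (θ : ℝ) :
    pt (gam G) t θ = t * (calE lam G.α G.U G.A G.φ G.σ t θ - potW G t θ / 4) := by
  have t0 : 0 < t := hTm.trans ht.1
  have h := ((smη G).hasDerivAt_pt ht θ).fun_add ((pt_log_alpha G ht θ).const_mul (1 / 2))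
  have e : pt (gam G) t θ = _ := h.deriv
  have c := G.sys.constraint_t t ht θ
  rw [div_eq_iff t0.ne'] at c
  rw [e, c, calE, potW]
  ring

lemma pth_gam (hTm : 0 < Tm) {t : ℝ} (ht : t ∈ Ioo Tm Tp) (θ : ℝ) :
    pth (gam G) t θ = t * (flux G t θ / Real.sqrt (G.α t θ)) := by
  have t0 : 0 < t := hTm.trans ht.1
  have hα0 := G.sys.alpha_pos t ht θ
  have hs0 := sqrt_ne G ht θ
  have h := ((smη G).hasDerivAt_pth ht θ).fun_add
    ((((smα G).hasDerivAt_pth ht θ).log hα0.ne').const_mul (1 / 2))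
  have e : pth (gam G) t θ = _ := h.deriv
  have c := G.sys.constraint_θ t ht θ
  rw [div_eq_iff t0.ne'] at c
  rw [e, c, flux, mul_div_cancel_left₀ _ hs0]
  field_simp
  ring

end Energy

/-! ### Uniform bounds up to the final time -/

theorem gamma_alpha_bounded_future (Q lam Tm Tp t_i : ℝ) (hQ : Q ≠ 0) (hTm : 0 < Tm) (hti : Tm < t_i)
    (hTp : t_i < Tp) (G : GowdySolution Q lam Tm Tp) :
    ∃ C : ℝ, ∀ t ∈ Ico t_i Tp, ∀ θ : ℝ,
      |G.η t θ + 1 / 2 * Real.log (G.α t θ)| ≤ C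
      ∧ |pt G.α t θ / G.α t θ| ≤ C ∧ |Real.log (G.α t θ)| ≤ C
      ∧ |G.α t θ| ≤ C ∧ |G.η t θ| ≤ C ∧ |pt G.α t θ| ≤ C := by
  have hI : ∀ t ∈ Ico t_i Tp, t ∈ Ioo Tm Tp := fun t ht => ⟨hti.trans_le ht.1, ht.2⟩
  have htpos : ∀ t ∈ Ico t_i Tp, 0 < t := fun t ht => hTm.trans (hI t ht).1
  have hi : t_i ∈ Ico t_i Tp := ⟨le_rfl, hTp⟩
  have hTp0 : 0 < Tp := (htpos _ hi).trans hTp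
  have perη := G.periodic G.η (by simp)
  have perα := G.periodic G.α (by simp)
  have perU := G.periodic G.U (by simp)
  have perφ := G.periodic G.φ (by simp)
  -- `α` is nonincreasing in time, hence bounded above
  obtain ⟨a, ha⟩ := bounded_of_continuous_periodic (G.α t_i)
    ((smα G).continuous_snd (hI _ hi)) (perα t_i)
  have hαa : ∀ t ∈ Ico t_i Tp, ∀ θ, G.α t θ ≤ a := by
    intro t ht θ
    have h := le_add_of_deriv_le (K := 0) (fun t ht => (smα G).hasDerivAt_pt (hI t ht) θ)
      (fun t ht => by
        have h0 := potW_nonneg G (hI t ht) θ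
        have h1 := G.sys.alpha_pos t (hI t ht) θ
        have h2 := htpos t ht
        have : 0 ≤ t * potW G t θ * G.α t θ := by positivity
        rw [pt_alpha_eq G (hI t ht) θ]
        linarith) t ht
    linarith [(abs_le.1 (ha θ)).2]
  set R := Real.sqrt a with hR
  have hR0 : 0 ≤ R := Real.sqrt_nonneg a
  have hsR : ∀ t ∈ Ico t_i Tp, ∀ θ, Real.sqrt (G.α t θ) ≤ R := fun t ht θ =>
    Real.sqrt_le_sqrt (hαa t ht θ)
  have hspos : ∀ t ∈ Ico t_i Tp, ∀ θ, 0 < Real.sqrt (G.α t θ) := fun t ht θ =>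
    Real.sqrt_pos.2 (G.sys.alpha_pos t (hI t ht) θ)
  have hE0 : ∀ t ∈ Ico t_i Tp, ∀ θ, 0 ≤ calE lam G.α G.U G.A G.φ G.σ t θ := fun t ht θ =>
    (abs_nonneg _).trans (abs_flux_le G (hI t ht) θ)
  have hW0 : ∀ t ∈ Ico t_i Tp, ∀ θ, 0 ≤ potW G t θ := fun t ht θ => potW_nonneg G (hI t ht) θ
  -- the energy is bounded by its initial value
  set E0 := ∫ θ in (0 : ℝ)..(2 * π), dens G t_i θ with hE0def
  have hE : ∀ t ∈ Ico t_i Tp, ∫ θ in (0 : ℝ)..(2 * π), dens G t θ ≤ E0 := by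
    intro t ht
    have h := le_add_of_deriv_le (K := 0)
      (fun t ht => (smDens G hTm).hasDerivAt_integral (hI t ht))
      (fun t ht => integral_pt_dens_nonpos G hTm (hI t ht)) t ht
    linarith
  have hdens0 : ∀ t ∈ Ico t_i Tp, ∀ θ, 0 ≤ dens G t θ := by
    intro t ht θ
    have h := dens_mul_sqrt G (hI t ht) θ
    refine nonneg_of_mul_nonneg_left (b := Real.sqrt (G.α t θ)) ?_ (hspos t ht θ)
    rw [h]
    linarith [hE0 t ht θ, hW0 t ht θ]
  -- `∂ₜ ∫ α^{-1/2} = (t/2) ∫ α^{-1/2} W ≤ 2 Tp E`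
  set K1 := (∫ θ in (0 : ℝ)..(2 * π), invSqrt G t_i θ) + 2 * Tp * E0 * (Tp - t_i) with hK1
  have hS : ∀ t ∈ Ico t_i Tp, ∫ θ in (0 : ℝ)..(2 * π), invSqrt G t θ ≤ K1 := by
    intro t ht
    have h := le_add_of_deriv_le (K := 2 * Tp * E0)
      (fun t ht => (smInvSqrt G).hasDerivAt_integral (hI t ht))
      (fun t ht => by
        refine le_trans (intervalIntegral.integral_mono_on (by positivity)
          (g := fun θ => 2 * Tp * dens G t θ)
          ((smInvSqrt G).pt.intervalIntegrable (hI t ht) _ _)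
          (((smDens G hTm).intervalIntegrable (hI t ht) _ _).const_mul _) fun θ _ => ?_) ?_
        · have hs := hspos t ht θ
          have h1 : potW G t θ / Real.sqrt (G.α t θ) ≤ 4 * dens G t θ := by
            rw [div_le_iff₀ hs]
            linarith [dens_mul_sqrt G (hI t ht) θ, hE0 t ht θ]
          rw [pt_invSqrt G (hI t ht) θ]
          have h2 : t * (potW G t θ / Real.sqrt (G.α t θ)) ≤ Tp * (4 * dens G t θ) :=
            mul_le_mul ht.2.le h1 (div_nonneg (hW0 t ht θ) hs.le) hTp0.le
          linarith
        · rw [intervalIntegral.integral_const_mul]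
          exact mul_le_mul_of_nonneg_left (hE t ht) (by positivity)) t ht
    have hE00 : 0 ≤ E0 := intervalIntegral.integral_nonneg (by positivity)
      fun θ _ => hdens0 t_i hi θ
    have h3 : 2 * Tp * E0 * (t - t_i) ≤ 2 * Tp * E0 * (Tp - t_i) :=
      mul_le_mul_of_nonneg_left (by linarith [ht.2]) (by positivity)
    linarith
  -- a single dominating density with bounded integral
  let H : ℝ → ℝ → ℝ := fun t θ => 1 + dens G t θ + invSqrt G t θ
  have hHs : Sm Tm Tp H := ((Sm.const 1).add (smDens G hTm)).add (smInvSqrt G)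
  have hHK : ∀ t ∈ Ico t_i Tp, ∫ θ in (0 : ℝ)..(2 * π), H t θ ≤ 2 * π + E0 + K1 := by
    intro t ht
    have i1 := (smDens G hTm).intervalIntegrable (hI t ht) 0 (2 * π)
    have i2 := (smInvSqrt G).intervalIntegrable (hI t ht) 0 (2 * π)
    have : ∫ θ in (0 : ℝ)..(2 * π), H t θ = 2 * π + (∫ θ in (0 : ℝ)..(2 * π), dens G t θ)
        + ∫ θ in (0 : ℝ)..(2 * π), invSqrt G t θ := by
      rw [intervalIntegral.integral_add (intervalIntegrable_const.add i1) i2,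
        intervalIntegral.integral_add intervalIntegrable_const i1]
      simp
    rw [this]
    linarith [hE t ht, hS t ht]
  set M := 1 + R + Tp + Tp * R with hMdef
  have hTR : 0 ≤ Tp * R := by positivity
  have hM0 : 0 ≤ M := by positivity
  have hinv0 : ∀ t ∈ Ico t_i Tp, ∀ θ, 0 ≤ invSqrt G t θ := fun t ht θ =>
    (div_pos one_pos (hspos t ht θ)).le
  have hdom : ∀ t ∈ Ico t_i Tp, ∀ θ, ∀ c ≤ M, 0 ≤ c →
      c * dens G t θ + 1 + invSqrt G t θ ≤ M * H t θ := by
    intro t ht θ c hc hc0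
    have h1 := hdens0 t ht θ
    have h2 := hinv0 t ht θ
    have h3 : (1 : ℝ) ≤ M := by linarith
    have h4 := mul_le_mul_of_nonneg_right hc h1
    have h5 := mul_le_mul_of_nonneg_right h3 h2
    have h6 : M * H t θ = M + M * dens G t θ + M * invSqrt G t θ := by simp only [H]; ring
    linarith
  -- `𝓔 + W/4 ≤ R · dens` and `𝓔 / √α ≤ dens`
  have hER : ∀ t ∈ Ico t_i Tp, ∀ θ,
      calE lam G.α G.U G.A G.φ G.σ t θ + potW G t θ / 4 ≤ R * dens G t θ := fun t ht θ => by
    rw [← dens_mul_sqrt G (hI t ht) θ, mul_comm]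
    exact mul_le_mul_of_nonneg_right (hsR t ht θ) (hdens0 t ht θ)
  have hEs : ∀ t ∈ Ico t_i Tp, ∀ θ,
      calE lam G.α G.U G.A G.φ G.σ t θ / Real.sqrt (G.α t θ) ≤ dens G t θ := fun t ht θ => by
    rw [div_le_iff₀ (hspos t ht θ), dens_mul_sqrt G (hI t ht) θ]
    linarith [hW0 t ht θ]
  -- Young's inequality with weight `√α`
  have young : ∀ t ∈ Ico t_i Tp, ∀ θ x : ℝ,
      G.α t θ * x ^ 2 ≤ 4 * calE lam G.α G.U G.A G.φ G.σ t θ →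
      |x| ≤ dens G t θ + invSqrt G t θ := by
    intro t ht θ x hx
    have hs := hspos t ht θ
    have hsq : Real.sqrt (G.α t θ) ^ 2 = G.α t θ := Real.sq_sqrt (G.sys.alpha_pos t (hI t ht) θ).le
    refine le_trans ?_ (add_le_add_left (hEs t ht θ) _)
    rw [invSqrt, ← add_div, le_div_iff₀ hs]
    rw [← hsq, ← sq_abs x] at hx
    nlinarith [sq_nonneg (|x| * Real.sqrt (G.α t θ) / 2 - 1)]
  obtain ⟨CU, hCU⟩ := bounded_of_density hti (smU G) hHs perU hM0 hHK
    (fun t ht θ => by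
      have h1 := calE_ge_U G (hI t ht) θ
      have h2 : 0 ≤ G.α t θ * (pth G.U t θ) ^ 2 :=
        mul_nonneg (G.sys.alpha_pos t (hI t ht) θ).le (sq_nonneg _)
      have h3 := hdom t ht θ R (by linarith) hR0
      have h4 := hER t ht θ
      have h5 := hW0 t ht θ
      have h6 := hinv0 t ht θ
      exact abs_le.2 ⟨by nlinarith [sq_nonneg (pt G.U t θ + 1 / 2)],
        by nlinarith [sq_nonneg (pt G.U t θ - 1 / 2)]⟩)
    (fun t ht θ => by
      have h1 := calE_ge_U G (hI t ht) θ
      have h3 := hdom t ht θ 1 (by linarith) zero_le_one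
      have h4 := hE0 t ht θ
      have h2 := young t ht θ (pth G.U t θ) (by nlinarith [sq_nonneg (pt G.U t θ)])
      linarith)
  obtain ⟨Cφ, hCφ⟩ := bounded_of_density hti (smφ G) hHs perφ hM0 hHK
    (fun t ht θ => by
      have h1 := calE_ge_φ G (hI t ht) θ
      have h2 : 0 ≤ G.α t θ * (pth G.φ t θ) ^ 2 :=
        mul_nonneg (G.sys.alpha_pos t (hI t ht) θ).le (sq_nonneg _)
      have h3 := hdom t ht θ R (by linarith) hR0
      have h4 := hER t ht θ
      have h5 := hW0 t ht θ
      have h6 := hinv0 t ht θ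
      exact abs_le.2 ⟨by nlinarith [sq_nonneg (pt G.φ t θ / 2 + 1)],
        by nlinarith [sq_nonneg (pt G.φ t θ / 2 - 1)]⟩)
    (fun t ht θ => by
      have h1 := calE_ge_φ G (hI t ht) θ
      have h3 := hdom t ht θ 1 (by linarith) zero_le_one
      have h2 := young t ht θ (pth G.φ t θ) (by nlinarith [sq_nonneg (pt G.φ t θ)])
      linarith)
  obtain ⟨Cγ, hCγ⟩ := bounded_of_density hti (smGam G) hHs
    (fun t θ => by simp only [gam, perη, perα]) hM0 hHK
    (fun t ht θ => by
      have h1 := hdom t ht θ (Tp * R) (by linarith) hTR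
      have h2 := hinv0 t ht θ
      have h3 := hE0 t ht θ
      have h4 := hW0 t ht θ
      rw [pt_gam G hTm (hI t ht) θ, abs_mul, abs_of_pos (htpos t ht)]
      have h5 : |calE lam G.α G.U G.A G.φ G.σ t θ - potW G t θ / 4| ≤ R * dens G t θ :=
        le_trans (abs_le.2 ⟨by linarith, by linarith⟩) (hER t ht θ)
      have h6 := mul_le_mul ht.2.le h5 (abs_nonneg _) hTp0.le
      linarith)
    (fun t ht θ => by
      have h1 := hdom t ht θ Tp (by linarith) hTp0.le
      have h2 := hinv0 t ht θ
      have hs := hspos t ht θ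
      rw [pth_gam G hTm (hI t ht) θ, abs_mul, abs_of_pos (htpos t ht), abs_div, abs_of_pos hs]
      have h5 : |flux G t θ| / Real.sqrt (G.α t θ) ≤ dens G t θ :=
        le_trans (div_le_div_of_nonneg_right (abs_flux_le G (hI t ht) θ) hs.le) (hEs t ht θ)
      have h6 := mul_le_mul ht.2.le h5 (div_nonneg (abs_nonneg _) hs.le) hTp0.le
      linarith)
  -- `W = Q² e^{2(γ + λφ - U)}` is now bounded
  set B := Q ^ 2 * exp (2 * (Cγ + |lam| * Cφ + CU)) with hB
  have hWB : ∀ t ∈ Ico t_i Tp, ∀ θ, potW G t θ ≤ B := by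
    intro t ht θ
    have hα0 := G.sys.alpha_pos t (hI t ht) θ
    have e : potW G t θ = Q ^ 2 * exp (2 * (gam G t θ + lam * G.φ t θ - G.U t θ)) := by
      have : exp (2 * (gam G t θ + lam * G.φ t θ - G.U t θ))
          = exp (Real.log (G.α t θ)) * exp (2 * lam * G.φ t θ + 2 * (G.η t θ - G.U t θ)) := by
        rw [← Real.exp_add, gam]; congr 1; ring
      rw [this, Real.exp_log hα0, potW]; ring
    rw [e]
    refine mul_le_mul_of_nonneg_left (Real.exp_le_exp.2 ?_) (sq_nonneg Q)
    have h1 : lam * G.φ t θ ≤ |lam| * Cφ :=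
      (le_abs_self _).trans (by
        rw [abs_mul]; exact mul_le_mul_of_nonneg_left (hCφ t ht θ) (abs_nonneg _))
    linarith [(abs_le.1 (hCγ t ht θ)).2, (abs_le.1 (hCU t ht θ)).1]
  have htW : ∀ t ∈ Ico t_i Tp, ∀ θ, |-t * potW G t θ| ≤ Tp * B := by
    intro t ht θ
    rw [neg_mul, abs_neg, abs_mul, abs_of_pos (htpos t ht), abs_of_nonneg (hW0 t ht θ)]
    exact mul_le_mul ht.2.le (hWB t ht θ) (hW0 t ht θ) hTp0.le
  obtain ⟨l, hl⟩ := bounded_of_continuous_periodic (fun θ => Real.log (G.α t_i θ))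
    (((smα G).continuous_snd (hI _ hi)).log fun θ => (G.sys.alpha_pos t_i (hI _ hi) θ).ne')
    (fun θ => by simp only [perα])
  set L := l + Tp * B * (Tp - t_i) with hL
  have hlog : ∀ t ∈ Ico t_i Tp, ∀ θ, |Real.log (G.α t θ)| ≤ L := by
    intro t ht θ
    have h := abs_sub_le_of_abs_deriv_le (fun t ht => pt_log_alpha G (hI t ht) θ)
      (fun t ht => htW t ht θ) t ht
    have h1 := abs_le.1 h
    have h2 := abs_le.1 (hl θ)
    exact abs_le.2 ⟨by linarith [h2.1], by linarith [h2.2]⟩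
  have hγ0 : 0 ≤ Cγ := (abs_nonneg _).trans (hCγ t_i hi 0)
  have hL0 : 0 ≤ L := (abs_nonneg _).trans (hlog t_i hi 0)
  have ha0 : 0 ≤ a := (abs_nonneg _).trans (ha 0)
  have hTB : 0 ≤ Tp * B := by positivity
  have hTBa : 0 ≤ Tp * B * a := by positivity
  refine ⟨Cγ + L + a + Tp * B + Tp * B * a, fun t ht θ => ?_⟩
  have hα0 := G.sys.alpha_pos t (hI t ht) θ
  have g1 := hCγ t ht θ
  have g2 := htW t ht θ
  have g3 := hlog t ht θ
  have g4 : |G.α t θ| ≤ a := by rw [abs_of_pos hα0]; exact hαa t ht θ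
  have g5 : |G.η t θ| ≤ Cγ + L := by
    have h1 := abs_le.1 g1
    have h2 := abs_le.1 g3
    unfold gam at h1
    exact abs_le.2 ⟨by linarith [h1.1, h2.2], by linarith [h1.2, h2.1]⟩
  have g6 : |pt G.α t θ| ≤ Tp * B * a := by
    rw [pt_alpha_eq G (hI t ht) θ, abs_mul]
    exact mul_le_mul g2 g4 (abs_nonneg _) hTB
  have g7 : |pt G.α t θ / G.α t θ| ≤ Tp * B := by
    rw [pt_alpha_eq G (hI t ht) θ, mul_div_cancel_right₀ _ hα0.ne']
    exact g2
  refine ⟨?_, by linarith, by linarith, by linarith, by linarith, by linarith⟩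
  unfold gam at g1
  linarith

end
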